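/- In the two-dimensional regime with 0 < c/a ≤ λ^{-2} (equivalently d₀ = (1/2)log_λ(a/c) ≥ 1), the constant E_{d₀} = a(λ^{2d₀} − λ^{−2d₀}) + b(λ^{2d₀} − 1) vanishes, where a + b + c = 0; consequently the enstrophy |u|_{d₀} is conserved along smooth solutions of the unforced inviscid sabra shell model, and every solution with u^{in} ∈ V_s, s ≥ d₀, extends globally: u ∈ C¹((−∞,∞), V_s). -/

import Mathlib

open Complex

/-- Wavenumbers of the sabra shell model: `k n = k0 * λ^n`. -/
noncomputable def kk (k0 lam : ℝ) (n : ℤ) : ℝ := k0 * lam ^ n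

/-- Nonlinear term of the sabra shell model. -/
noncomputable def sB (a b c k0 lam : ℝ) (u : ℤ → ℂ) (n : ℤ) : ℂ :=
  -Complex.I * ((a : ℂ) * (kk k0 lam (n + 1) : ℝ) * u (n + 2) * (starRingEnd ℂ) (u (n + 1))
    + (b : ℂ) * (kk k0 lam n : ℝ) * u (n + 1) * (starRingEnd ℂ) (u (n - 1))
    - (c : ℂ) * (kk k0 lam (n - 1) : ℝ) * u (n - 1) * u (n - 2))

/-- Membership in `V_r`. -/
def InV (k0 lam r : ℝ) (u : ℤ → ℂ) : Prop :=
  (∀ n : ℤ, n ≤ 0 → u n = 0) ∧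
  Summable fun n : ℕ => (kk k0 lam ((n : ℤ) + 1)) ^ (2 * r) * ‖u ((n : ℤ) + 1)‖ ^ 2

/-- A global `C¹` solution (all of ℝ) of the unforced inviscid sabra shell model with
values in `V_s`. -/
def IsGlobalSolution (a b c k0 lam s : ℝ) (uin : ℤ → ℂ) (u : ℝ → ℤ → ℂ) : Prop :=
  (∀ n : ℤ, u 0 n = uin n) ∧
  (∀ t : ℝ, InV k0 lam s (u t)) ∧
  (∀ t : ℝ, ∀ n : ℤ, 1 ≤ n →
    HasDerivAt (fun τ => u τ n) (-sB a b c k0 lam (u t) n) t) ∧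
  Continuous (fun t => ∑' n : ℕ,
    (kk k0 lam ((n : ℤ) + 1)) ^ (2 * s) * ‖u t ((n : ℤ) + 1)‖ ^ 2) ∧
  Continuous (fun t => ∑' n : ℕ,
    (kk k0 lam ((n : ℤ) + 1)) ^ (2 * s) * ‖sB a b c k0 lam (u t) ((n : ℤ) + 1)‖ ^ 2)

section GlobalODE

open Set Metric Filter

/-- A vector field that is Lipschitz on balls and whose trajectories, even after a bounded
rescaling of time, obey an a priori bound on each compact interval has global trajectories. -/
theorem exists_global_trajectory_of_apriori {E : Type*} [NormedAddCommGroup E] [NormedSpace ℝ E]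
    [CompleteSpace E] {F : E → E} {x₀ : E}
    (hlip : ∀ ρ : ℝ, ∃ K : ℝ, 0 ≤ K ∧ ∀ v w : E, ‖v‖ ≤ ρ → ‖w‖ ≤ ρ → ‖F v - F w‖ ≤ K * ‖v - w‖)
    (hapriori : ∀ T : ℝ, ∃ R : ℝ, ∀ τ ∈ Icc 0 T, ∀ (g : ℝ → ℝ) (v : ℝ → E),
      ContinuousOn g (Icc 0 τ) → (∀ t ∈ Icc 0 τ, |g t| ≤ 1) → v 0 = x₀ →
      (∀ t ∈ Icc 0 τ, HasDerivAt v (g t • F (v t)) t) → ‖v τ‖ ≤ R) :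
    ∃ v : ℝ → E, v 0 = x₀ ∧ ∀ t, HasDerivAt v (F (v t)) t := by
  have hloc : ∀ T : ℝ, 0 < T → ∃ (v : ℝ → E) (R : ℝ), v 0 = x₀ ∧
      ∀ t ∈ Ioo (-T) T, HasDerivAt v (F (v t)) t ∧ ‖v t‖ ≤ R := by
    intro T hT
    obtain ⟨R, hR⟩ := hapriori T
    set θ : E → ℝ := fun v => max 0 (min 1 (R + 1 - ‖v‖)) with hθ
    have hθ0 : ∀ v, 0 ≤ θ v := fun v => le_max_left _ _
    have hθ1 : ∀ v, θ v ≤ 1 := fun v => max_le zero_le_one (min_le_left _ _)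
    have hθlip : ∀ v w, |θ v - θ w| ≤ ‖v - w‖ := by
      intro v w
      have h1 : |θ v - θ w| ≤ |min 1 (R + 1 - ‖v‖) - min 1 (R + 1 - ‖w‖)| := by
        have := abs_max_sub_max_le_max 0 (min 1 (R + 1 - ‖v‖)) 0 (min 1 (R + 1 - ‖w‖))
        simpa using this
      have h2 : |min 1 (R + 1 - ‖v‖) - min 1 (R + 1 - ‖w‖)| ≤ |‖w‖ - ‖v‖| := by
        have := abs_min_sub_min_le_max 1 (R + 1 - ‖v‖) 1 (R + 1 - ‖w‖)
        simpa using this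
      exact h1.trans (h2.trans ((abs_norm_sub_norm_le w v).trans (norm_sub_rev w v).le))
    have hθcont : Continuous θ := by fun_prop
    have hbd : ∀ ρ : ℝ, 0 ≤ ρ → ∃ B : ℝ, 0 ≤ B ∧ ∀ v, ‖v‖ ≤ ρ → ‖F v‖ ≤ B := by
      intro ρ hρ
      obtain ⟨K, hK, h⟩ := hlip ρ
      refine ⟨K * ρ + ‖F 0‖, by positivity, fun v hv => ?_⟩
      have h1 := h v 0 hv (by simpa using hρ)
      rw [sub_zero] at h1
      have h2 := norm_sub_norm_le (F v) (F 0)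
      have h3 := mul_le_mul_of_nonneg_left hv hK
      linarith
    obtain ⟨L, hL, hFL⟩ := hbd (|R| + 1) (by positivity)
    have hnorm : ∀ v, ‖θ v • F v‖ ≤ L := by
      intro v
      rw [norm_smul, Real.norm_of_nonneg (hθ0 v)]
      by_cases hv : ‖v‖ ≤ |R| + 1
      · calc θ v * ‖F v‖ ≤ 1 * L := mul_le_mul (hθ1 v) (hFL v hv) (norm_nonneg _) zero_le_one
          _ = L := one_mul L
      · have : θ v = 0 := by
          apply max_eq_left
          apply (min_le_right _ _).trans
          have := le_abs_self R
          push Not at hv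
          linarith
        simpa [this] using hL
    have hA : 0 ≤ L * T := by positivity
    obtain ⟨K, hK, hFK⟩ := hlip (‖x₀‖ + L * T)
    obtain ⟨B, hB, hFB⟩ := hbd (‖x₀‖ + L * T) (by positivity)
    have hball : ∀ v ∈ closedBall x₀ (L * T), ‖v‖ ≤ ‖x₀‖ + L * T := by
      intro v hv
      rw [mem_closedBall, dist_eq_norm] at hv
      have := norm_sub_norm_le v x₀
      linarith
    have hPL : IsPicardLindelof (fun _ v => θ v • F v)
        (⟨0, by constructor <;> linarith⟩ : Icc (-T) T) x₀ ⟨L * T, hA⟩ 0 ⟨L, hL⟩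
        ⟨K + B, by positivity⟩ := by
      refine ⟨fun t _ => ?_, fun x _ => continuousOn_const, fun t _ v _ => hnorm v, ?_⟩
      · refine LipschitzOnWith.of_dist_le_mul fun v hv w hw => ?_
        have hv' := hball v hv
        have hw' := hball w hw
        rw [dist_eq_norm, dist_eq_norm]
        have e : θ v • F v - θ w • F w = θ v • (F v - F w) + (θ v - θ w) • F w := by
          rw [smul_sub, sub_smul]; abel
        rw [e]
        calc ‖θ v • (F v - F w) + (θ v - θ w) • F w‖
            ≤ θ v * ‖F v - F w‖ + |θ v - θ w| * ‖F w‖ := by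
              refine (norm_add_le _ _).trans_eq ?_
              rw [norm_smul, norm_smul, Real.norm_of_nonneg (hθ0 v), Real.norm_eq_abs]
          _ ≤ 1 * (K * ‖v - w‖) + ‖v - w‖ * B := by
              have := hFK v w hv' hw'
              have := hFB w hw'
              have := hθ1 v
              have := hθlip v w
              gcongr
          _ = (K + B) * ‖v - w‖ := by ring
      · simp only [sub_zero, zero_sub, neg_neg, max_self, NNReal.coe_zero]; exact le_rfl
    obtain ⟨v, hv0, hv⟩ := hPL.exists_eq_forall_mem_Icc_hasDerivWithinAt₀
    have hvd : ∀ t ∈ Ioo (-T) T, HasDerivAt v (θ (v t) • F (v t)) t := fun t ht =>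
      (hv t (Ioo_subset_Icc_self ht)).hasDerivAt (Icc_mem_nhds ht.1 ht.2)
    have hbound : ∀ t ∈ Ioo (-T) T, ‖v t‖ ≤ R := by
      intro t ht
      rcases le_total 0 t with h0 | h0
      · have hsub : ∀ r ∈ Icc 0 t, r ∈ Ioo (-T) T := fun r hr =>
          ⟨by linarith [hr.1], hr.2.trans_lt ht.2⟩
        refine hR t ⟨h0, ht.2.le⟩ (fun r => θ (v r)) v ?_ ?_ hv0 fun r hr => hvd r (hsub r hr)
        · exact hθcont.comp_continuousOn fun r hr =>
            (hvd r (hsub r hr)).continuousAt.continuousWithinAt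
        · exact fun r _ => abs_le.2 ⟨by linarith [hθ0 (v r)], hθ1 _⟩
      · have hsub : ∀ r ∈ Icc 0 (-t), -r ∈ Ioo (-T) T := fun r hr =>
          ⟨by linarith [hr.2, ht.1], by linarith [hr.1]⟩
        have hd : ∀ r ∈ Icc 0 (-t), HasDerivAt (fun r => v (-r))
            ((-θ (v (-r))) • F (v (-r))) r := fun r hr => by
          have := (hvd (-r) (hsub r hr)).scomp r (hasDerivAt_neg r)
          simpa [Function.comp_def, neg_smul] using this
        have := hR (-t) ⟨by linarith, by linarith [ht.1]⟩ (fun r => -θ (v (-r)))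
          (fun r => v (-r)) ?_ ?_ (by simpa using hv0) hd
        · simpa using this
        · exact (hθcont.comp_continuousOn fun r hr =>
            (hd r hr).continuousAt.continuousWithinAt).neg
        · exact fun r _ => by
            rw [abs_neg]
            exact abs_le.2 ⟨by linarith [hθ0 (v (-r))], hθ1 _⟩
    refine ⟨v, R, hv0, fun t ht => ⟨?_, hbound t ht⟩⟩
    have : θ (v t) = 1 := by
      have := hbound t ht
      simp only [hθ]
      rw [min_eq_left (by linarith), max_eq_right zero_le_one]
    simpa [this] using hvd t ht
  choose w R hw0 hw using fun n : ℕ => hloc (n + 1) (by positivity)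
  have huniq : ∀ n m : ℕ, n ≤ m → ∀ t : ℝ, |t| < n + 1 → w n t = w m t := by
    intro n m hnm t ht
    have hnm' : (n : ℝ) ≤ m := by exact_mod_cast hnm
    obtain ⟨K, hK, hFK⟩ := hlip (max (R n) (R m))
    have hsub : ∀ r ∈ Ioo (-(n + 1 : ℝ)) (n + 1), r ∈ Ioo (-(m + 1 : ℝ)) (m + 1) := fun r hr =>
      ⟨by linarith [hr.1], by linarith [hr.2]⟩
    refine ODE_solution_unique_of_mem_Ioo (v := fun _ => F) (K := ⟨K, hK⟩) (t₀ := 0)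
      (s := fun _ => closedBall 0 (max (R n) (R m))) (fun r _ => ?_)
      (by constructor <;> linarith [n.cast_nonneg (α := ℝ)])
      (fun r hr => ⟨(hw n r hr).1, ?_⟩) (fun r hr => ⟨(hw m r (hsub r hr)).1, ?_⟩)
      (by rw [hw0, hw0]) (abs_lt.1 ht)
    · refine LipschitzOnWith.of_dist_le_mul fun v hv w hw => ?_
      rw [dist_eq_norm, dist_eq_norm]
      exact hFK v w (by simpa using hv) (by simpa using hw)
    · simpa using Or.inl (hw n r hr).2
    · simpa using Or.inr (hw m r (hsub r hr)).2
  have hself : ∀ t : ℝ, |t| < ⌈|t|⌉₊ + 1 := fun t =>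
    (Nat.le_ceil _).trans_lt (lt_add_one _)
  have heq : ∀ (n : ℕ) (t : ℝ), |t| < n + 1 → w ⌈|t|⌉₊ t = w n t := by
    intro n t ht
    rcases le_total ⌈|t|⌉₊ n with h | h
    · exact huniq _ _ h t (hself t)
    · exact (huniq _ _ h t ht).symm
  refine ⟨fun t => w ⌈|t|⌉₊ t, by simpa using hw0 _, fun t => ?_⟩
  refine (hw ⌈|t|⌉₊ t (abs_lt.1 (hself t))).1.congr_of_eventuallyEq ?_
  filter_upwards [(isOpen_lt continuous_abs continuous_const).mem_nhds (hself t)] with r hr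
  exact heq _ r hr

end GlobalODE

section Weights

variable {k0 lam : ℝ}

lemma kk_pos (hk0 : 0 < k0) (hlam : 1 < lam) (n : ℤ) : 0 < kk k0 lam n :=
  mul_pos hk0 (zpow_pos (by linarith) n)

lemma kk_add_one (hlam : 1 < lam) (n : ℤ) : kk k0 lam (n + 1) = lam * kk k0 lam n := by
  rw [kk, kk, zpow_add_one₀ (by linarith)]; ring

lemma kk_mono (hk0 : 0 < k0) (hlam : 1 < lam) : Monotone (kk k0 lam) := fun _ _ h =>
  mul_le_mul_of_nonneg_left (zpow_le_zpow_right₀ hlam.le h) hk0.le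

lemma kk_rpow_add_one (hk0 : 0 < k0) (hlam : 1 < lam) (r : ℝ) (n : ℤ) :
    kk k0 lam (n + 1) ^ r = lam ^ r * kk k0 lam n ^ r := by
  rw [kk_add_one hlam, Real.mul_rpow (by linarith) (kk_pos hk0 hlam n).le]

lemma sq_rpow_eq {x : ℝ} (hx : 0 ≤ x) (r : ℝ) : (x ^ r) ^ 2 = x ^ (2 * r) := by
  rw [← Real.rpow_natCast, ← Real.rpow_mul hx]; congr 1; push_cast; ring

/-- On positive indices smaller powers of the wavenumbers are dominated by larger ones. -/
lemma kk_rpow_le (hk0 : 0 < k0) (hlam : 1 < lam) {p q : ℝ} (hpq : p ≤ q) {n : ℤ} (hn : 1 ≤ n) :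
    kk k0 lam n ^ p ≤ kk k0 lam 1 ^ (p - q) * kk k0 lam n ^ q := by
  have h := kk_pos hk0 hlam n
  have h1 : kk k0 lam n ^ p = kk k0 lam n ^ (p - q) * kk k0 lam n ^ q := by
    rw [← Real.rpow_add h]; congr 1; ring
  rw [h1]
  refine mul_le_mul_of_nonneg_right ?_ (Real.rpow_nonneg h.le _)
  exact Real.rpow_le_rpow_of_nonpos (kk_pos hk0 hlam 1) (kk_mono hk0 hlam hn) (by linarith)

lemma kk_rpow_mul_norm_le (hk0 : 0 < k0) (hlam : 1 < lam) {p q : ℝ} (hpq : p ≤ q) {u : ℤ → ℂ}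
    (hu : ∀ n ≤ 0, u n = 0) {Y : ℝ} {n : ℤ} (hY : kk k0 lam n ^ q * ‖u n‖ ≤ Y) :
    kk k0 lam n ^ p * ‖u n‖ ≤ kk k0 lam 1 ^ (p - q) * Y := by
  have hkp : ∀ (r : ℝ) (n : ℤ), 0 < kk k0 lam n ^ r := fun r n =>
    Real.rpow_pos_of_pos (kk_pos hk0 hlam n) _
  have h1 := hkp (p - q) 1
  rcases le_or_gt n 0 with h | h
  · rw [hu n h] at hY ⊢
    simp only [norm_zero, mul_zero] at hY ⊢
    positivity
  · calc kk k0 lam n ^ p * ‖u n‖ ≤ (kk k0 lam 1 ^ (p - q) * kk k0 lam n ^ q) * ‖u n‖ := by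
          have := kk_rpow_le hk0 hlam hpq (show 1 ≤ n from h)
          gcongr
      _ = kk k0 lam 1 ^ (p - q) * (kk k0 lam n ^ q * ‖u n‖) := by ring
      _ ≤ kk k0 lam 1 ^ (p - q) * Y := by gcongr

lemma InV.kk_rpow_mul_norm_le_sqrt (hk0 : 0 < k0) (hlam : 1 < lam) {r M : ℝ} {u : ℤ → ℂ}
    (hu : InV k0 lam r u)
    (hM : ∑' n : ℕ, kk k0 lam ((n : ℤ) + 1) ^ (2 * r) * ‖u ((n : ℤ) + 1)‖ ^ 2 ≤ M) (n : ℤ) :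
    kk k0 lam n ^ r * ‖u n‖ ≤ √M := by
  rcases le_or_gt n 0 with h | h
  · rw [hu.1 n h]; simp
  · apply Real.le_sqrt_of_sq_le
    rw [mul_pow, sq_rpow_eq (kk_pos hk0 hlam _).le]
    refine le_trans ?_ hM
    have := hu.2.le_tsum (n - 1).toNat fun n _ =>
      mul_nonneg (Real.rpow_nonneg (kk_pos hk0 hlam _).le _) (sq_nonneg _)
    have e : (((n - 1).toNat : ℕ) : ℤ) + 1 = n := by omega
    rwa [e] at this

lemma InV.of_le (hk0 : 0 < k0) (hlam : 1 < lam) {p q : ℝ} (hpq : p ≤ q) {u : ℤ → ℂ}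
    (hu : InV k0 lam q u) :
    InV k0 lam p u ∧ ∑' n : ℕ, kk k0 lam ((n : ℤ) + 1) ^ (2 * p) * ‖u ((n : ℤ) + 1)‖ ^ 2 ≤
      kk k0 lam 1 ^ (2 * p - 2 * q) *
        ∑' n : ℕ, kk k0 lam ((n : ℤ) + 1) ^ (2 * q) * ‖u ((n : ℤ) + 1)‖ ^ 2 := by
  have hle : ∀ n : ℕ, kk k0 lam ((n : ℤ) + 1) ^ (2 * p) * ‖u ((n : ℤ) + 1)‖ ^ 2 ≤
      kk k0 lam 1 ^ (2 * p - 2 * q) *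
        (kk k0 lam ((n : ℤ) + 1) ^ (2 * q) * ‖u ((n : ℤ) + 1)‖ ^ 2) := fun n => by
    rw [← mul_assoc]
    exact mul_le_mul_of_nonneg_right
      (kk_rpow_le hk0 hlam (by linarith) (by omega)) (sq_nonneg _)
  have hsum : InV k0 lam p u := ⟨hu.1, .of_nonneg_of_le (fun n => mul_nonneg
    (Real.rpow_nonneg (kk_pos hk0 hlam _).le _) (sq_nonneg _)) hle (hu.2.mul_left _)⟩
  refine ⟨hsum, ?_⟩
  rw [← tsum_mul_left]
  exact hsum.2.tsum_le_tsum hle (hu.2.mul_left _)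

end Weights

section Enstrophy

open Filter Topology Set

variable {a b c k0 lam d : ℝ}

/-- The nonlinear energy transfer attached to the triad `(n, n + 1, n + 2)`. -/
noncomputable def triad (k0 lam : ℝ) (u : ℤ → ℂ) (n : ℤ) : ℝ :=
  kk k0 lam (n + 1) * (u (n + 2) * (starRingEnd ℂ) (u (n + 1)) * (starRingEnd ℂ) (u n)).im

/-- The flux of the enstrophy `|u|_d` through the shell `n`. -/
noncomputable def enstrophyFlux (a c k0 lam d : ℝ) (u : ℤ → ℂ) (n : ℤ) : ℝ :=
  a * kk k0 lam n ^ (2 * d) * triad k0 lam u n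
    - c * kk k0 lam (n + 1) ^ (2 * d) * triad k0 lam u (n - 1)

lemma re_conj_mul_sB (u : ℤ → ℂ) (n : ℤ) :
    ((starRingEnd ℂ) (u n) * sB a b c k0 lam u n).re =
      a * triad k0 lam u n + b * triad k0 lam u (n - 1) + c * triad k0 lam u (n - 2) := by
  have e1 : n - 1 + 1 = n := by ring
  have e2 : n - 1 + 2 = n + 1 := by ring
  have e3 : n - 2 + 1 = n - 1 := by ring
  have e4 : n - 2 + 2 = n := by ring
  simp only [sB, triad, e1, e2, e3, e4, Complex.mul_re, Complex.mul_im, Complex.add_re,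
    Complex.add_im, Complex.sub_re, Complex.sub_im, Complex.neg_re, Complex.neg_im,
    Complex.I_re, Complex.I_im, Complex.conj_re, Complex.conj_im, Complex.ofReal_re,
    Complex.ofReal_im]
  ring

lemma sum_transfer_eq_flux (hk0 : 0 < k0) (hlam : 1 < lam)
    (hroot : a + b * lam ^ (2 * d) + c * (lam ^ (2 * d)) ^ 2 = 0) {u : ℤ → ℂ}
    (hu : ∀ n ≤ 0, u n = 0) (N : ℕ) :
    ∑ n ∈ Finset.range N, kk k0 lam ((n : ℤ) + 1) ^ (2 * d) *
      ((starRingEnd ℂ) (u ((n : ℤ) + 1)) * sB a b c k0 lam u ((n : ℤ) + 1)).re =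
      enstrophyFlux a c k0 lam d u N := by
  induction N with
  | zero => simp [enstrophyFlux, triad, hu]
  | succ N ih =>
    rw [Finset.sum_range_succ, ih, re_conj_mul_sB]
    have e1 : (N : ℤ) + 1 - 1 = N := by ring
    have e2 : (N : ℤ) + 1 - 2 = N - 1 := by ring
    push_cast
    simp only [enstrophyFlux, e1, e2, kk_rpow_add_one hk0 hlam]
    linear_combination (kk k0 lam N ^ (2 * d) * triad k0 lam u N) * hroot

lemma abs_triad_le (hk0 : 0 < k0) (hlam : 1 < lam) (u : ℤ → ℂ) (n : ℤ) :
    |triad k0 lam u n| ≤ kk k0 lam (n + 1) * (‖u (n + 2)‖ * ‖u (n + 1)‖ * ‖u n‖) := by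
  rw [triad, abs_mul, abs_of_pos (kk_pos hk0 hlam _)]
  refine mul_le_mul_of_nonneg_left ((Complex.abs_im_le_norm _).trans_eq ?_)
    (kk_pos hk0 hlam _).le
  simp

/-- The flux is small wherever `k_n ^ d |u_n|` is: this is where `1 ≤ d` enters. -/
lemma abs_enstrophyFlux_le (hk0 : 0 < k0) (hlam : 1 < lam) (hd : 1 ≤ d) {u : ℤ → ℂ}
    (hu : ∀ n ≤ 0, u n = 0) {Y : ℝ} (hY : ∀ n, kk k0 lam n ^ d * ‖u n‖ ≤ Y) (N : ℕ) :
    |enstrophyFlux a c k0 lam d u N| ≤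
      (|a| + |c| * lam ^ d * lam) * kk k0 lam 1 ^ (1 - d) * Y ^ 2 *
        (kk k0 lam ((N : ℤ) + 1) ^ d * ‖u ((N : ℤ) + 1)‖) := by
  set C := kk k0 lam 1 ^ (1 - d) with hC
  have hC0 : 0 < C := Real.rpow_pos_of_pos (kk_pos hk0 hlam 1) _
  have hkp : ∀ (r : ℝ) (n : ℤ), 0 < kk k0 lam n ^ r := fun r n =>
    Real.rpow_pos_of_pos (kk_pos hk0 hlam n) _
  have hlp : 0 < lam ^ d := Real.rpow_pos_of_pos (by linarith) _
  have hY0 : 0 ≤ Y := le_trans (by have := hkp d 0; positivity) (hY 0)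
  have hk1 : ∀ n, kk k0 lam n * ‖u n‖ ≤ C * Y := fun n => by
    simpa using kk_rpow_mul_norm_le hk0 hlam hd hu (hY n)
  set y := kk k0 lam ((N : ℤ) + 1) ^ d * ‖u ((N : ℤ) + 1)‖ with hy
  have hy0 : 0 ≤ y := by have := hkp d ((N : ℤ) + 1); positivity
  have hk0' := fun n => (kk_pos hk0 hlam n).le
  have e1 : kk k0 lam N ^ (2 * d) * |triad k0 lam u N| ≤ C * Y ^ 2 * y := by
    have hle : kk k0 lam N ^ d ≤ kk k0 lam (N + 1) ^ d :=
      Real.rpow_le_rpow (hk0' _) (kk_mono hk0 hlam (by omega)) (by linarith)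
    have hle' : kk k0 lam (N + 1) ≤ kk k0 lam (N + 2) := kk_mono hk0 hlam (by omega)
    have := hY N
    have := hk1 (N + 2)
    have := hkp d N
    calc kk k0 lam N ^ (2 * d) * |triad k0 lam u N|
        ≤ kk k0 lam N ^ (2 * d) *
          (kk k0 lam (N + 1) * (‖u (N + 2)‖ * ‖u (N + 1)‖ * ‖u N‖)) :=
          mul_le_mul_of_nonneg_left (abs_triad_le hk0 hlam u N) (hkp _ _).le
      _ = (kk k0 lam N ^ d * ‖u N‖) * (kk k0 lam N ^ d * ‖u (N + 1)‖) *
          (kk k0 lam (N + 1) * ‖u (N + 2)‖) := by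
          rw [← sq_rpow_eq (hk0' _)]; ring
      _ ≤ Y * y * (kk k0 lam (N + 2) * ‖u (N + 2)‖) := by
          have := hk0' (N + 1)
          have := hkp d (N + 1)
          gcongr
          exact mul_le_mul_of_nonneg_right hle (norm_nonneg _)
      _ ≤ Y * y * (C * Y) := by gcongr
      _ = C * Y ^ 2 * y := by ring
  have e2 : kk k0 lam (N + 1) ^ (2 * d) * |triad k0 lam u (N - 1)| ≤
      lam ^ d * lam * (C * Y ^ 2 * y) := by
    have h1 : kk k0 lam N = lam * kk k0 lam (N - 1) := by
      rw [← kk_add_one hlam]; congr 1; ring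
    have h2 := abs_triad_le hk0 hlam u (N - 1)
    have i1 : (N : ℤ) - 1 + 1 = N := by ring
    have i2 : (N : ℤ) - 1 + 2 = N + 1 := by ring
    rw [i1, i2] at h2
    have := hY N
    have := hk1 (N - 1)
    have := hkp d N
    have := hk0' (N - 1)
    calc kk k0 lam (N + 1) ^ (2 * d) * |triad k0 lam u (N - 1)|
        ≤ kk k0 lam (N + 1) ^ (2 * d) *
          (kk k0 lam N * (‖u (N + 1)‖ * ‖u N‖ * ‖u (N - 1)‖)) :=
          mul_le_mul_of_nonneg_left h2 (hkp _ _).le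
      _ = y * (kk k0 lam (N + 1) ^ d * ‖u N‖) * (kk k0 lam N * ‖u (N - 1)‖) := by
          rw [hy, ← sq_rpow_eq (hk0' _)]; ring
      _ = lam ^ d * lam * (y * (kk k0 lam N ^ d * ‖u N‖) *
          (kk k0 lam (N - 1) * ‖u (N - 1)‖)) := by
          rw [kk_rpow_add_one hk0 hlam, h1]; ring
      _ ≤ lam ^ d * lam * (y * Y * (C * Y)) := by gcongr
      _ = lam ^ d * lam * (C * Y ^ 2 * y) := by ring
  calc |enstrophyFlux a c k0 lam d u N|
      ≤ |a| * (kk k0 lam N ^ (2 * d) * |triad k0 lam u N|) +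
        |c| * (kk k0 lam (N + 1) ^ (2 * d) * |triad k0 lam u (N - 1)|) := by
        refine (abs_sub _ _).trans_eq ?_
        rw [abs_mul, abs_mul, abs_mul, abs_mul, abs_of_pos (hkp _ _), abs_of_pos (hkp _ _)]
        ring
    _ ≤ |a| * (C * Y ^ 2 * y) + |c| * (lam ^ d * lam * (C * Y ^ 2 * y)) := by gcongr
    _ = _ := by ring

/-- Conservation of enstrophy along (time-rescaled) trajectories of the sabra model. -/
theorem enstrophy_eq_of_trajectory (hk0 : 0 < k0) (hlam : 1 < lam) (hd : 1 ≤ d)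
    (hroot : a + b * lam ^ (2 * d) + c * (lam ^ (2 * d)) ^ 2 = 0)
    {α β M : ℝ} (hαβ : α ≤ β) {g : ℝ → ℝ} {u : ℝ → ℤ → ℂ}
    (hg : ContinuousOn g (Icc α β)) (hg1 : ∀ t ∈ Icc α β, |g t| ≤ 1)
    (hu : ∀ t ∈ Icc α β, InV k0 lam d (u t))
    (hM : ∀ t ∈ Icc α β,
      ∑' n : ℕ, kk k0 lam ((n : ℤ) + 1) ^ (2 * d) * ‖u t ((n : ℤ) + 1)‖ ^ 2 ≤ M)
    (hder : ∀ t ∈ Icc α β, ∀ n : ℤ, 1 ≤ n →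
      HasDerivAt (fun τ => u τ n) (-((g t : ℂ) * sB a b c k0 lam (u t) n)) t) :
    ∑' n : ℕ, kk k0 lam ((n : ℤ) + 1) ^ (2 * d) * ‖u α ((n : ℤ) + 1)‖ ^ 2 =
      ∑' n : ℕ, kk k0 lam ((n : ℤ) + 1) ^ (2 * d) * ‖u β ((n : ℤ) + 1)‖ ^ 2 := by
  set S : ℕ → ℝ → ℝ := fun N t =>
    ∑ n ∈ Finset.range N, kk k0 lam ((n : ℤ) + 1) ^ (2 * d) * ‖u t ((n : ℤ) + 1)‖ ^ 2 with hS
  set Φ : ℕ → ℝ → ℝ := fun N t => -2 * g t * enstrophyFlux a c k0 lam d (u t) N with hΦ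
  have hkp : ∀ (r : ℝ) (n : ℤ), 0 < kk k0 lam n ^ r := fun r n =>
    Real.rpow_pos_of_pos (kk_pos hk0 hlam n) _
  have hSder : ∀ N, ∀ t ∈ Icc α β, HasDerivAt (S N) (Φ N t) t := by
    intro N t ht
    have h1 : ∀ n : ℕ, HasDerivAt
        (fun τ => kk k0 lam ((n : ℤ) + 1) ^ (2 * d) * ‖u τ ((n : ℤ) + 1)‖ ^ 2)
        (-2 * g t * (kk k0 lam ((n : ℤ) + 1) ^ (2 * d) * ((starRingEnd ℂ) (u t ((n : ℤ) + 1)) *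
          sB a b c k0 lam (u t) ((n : ℤ) + 1)).re)) t := by
      intro n
      have h2 := (hder t ht ((n : ℤ) + 1) (by omega)).norm_sq.const_mul
        (kk k0 lam ((n : ℤ) + 1) ^ (2 * d))
      refine h2.congr_deriv ?_
      simp only [Complex.inner, Complex.mul_re, Complex.mul_im, Complex.neg_re, Complex.neg_im,
        Complex.conj_re, Complex.conj_im, Complex.ofReal_re, Complex.ofReal_im]
      ring
    refine (HasDerivAt.fun_sum fun n _ => h1 n).congr_deriv ?_
    rw [← Finset.mul_sum, sum_transfer_eq_flux hk0 hlam hroot (hu t ht).1]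
  have hterm : ∀ t ∈ Icc α β, ∀ n, kk k0 lam n ^ d * ‖u t n‖ ≤ √M := fun t ht =>
    (hu t ht).kk_rpow_mul_norm_le_sqrt hk0 hlam (hM t ht)
  set D := (|a| + |c| * lam ^ d * lam) * kk k0 lam 1 ^ (1 - d) * √M ^ 2 with hD
  have hD0 : 0 ≤ D := by
    have := hkp (1 - d) 1
    have : 0 < lam ^ d := Real.rpow_pos_of_pos (by linarith) _
    positivity
  have hΦle : ∀ N, ∀ t ∈ Icc α β, |Φ N t| ≤
      2 * D * (kk k0 lam ((N : ℤ) + 1) ^ d * ‖u t ((N : ℤ) + 1)‖) := by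
    intro N t ht
    have h1 := abs_enstrophyFlux_le (a := a) (c := c) hk0 hlam hd (hu t ht).1 (hterm t ht) N
    have h2 := hg1 t ht
    calc |Φ N t| = 2 * |g t| * |enstrophyFlux a c k0 lam d (u t) N| := by
          simp [hΦ, abs_mul]
      _ ≤ 2 * 1 * (D * (kk k0 lam ((N : ℤ) + 1) ^ d * ‖u t ((N : ℤ) + 1)‖)) := by gcongr
      _ = _ := by ring
  have hucont : ∀ n : ℤ, ContinuousOn (fun t => u t n) (Icc α β) := by
    intro n
    rcases le_or_gt n 0 with h | h
    · exact continuousOn_const.congr fun t ht => (hu t ht).1 n h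
    · exact fun t ht => (hder t ht n h).continuousAt.continuousWithinAt
  have htriad : ∀ n : ℤ, ContinuousOn (fun t => triad k0 lam (u t) n) (Icc α β) := by
    intro n
    refine continuousOn_const.mul (Complex.continuous_im.comp_continuousOn ?_)
    exact ((hucont _).mul (Complex.continuous_conj.comp_continuousOn (hucont _))).mul
      (Complex.continuous_conj.comp_continuousOn (hucont _))
  have hΦcont : ∀ N, ContinuousOn (Φ N) (Icc α β) := fun N =>
    (continuousOn_const.mul hg).mul
      ((continuousOn_const.mul (htriad _)).sub (continuousOn_const.mul (htriad _)))
  have hint : ∀ N, ∫ t in α..β, Φ N t = S N β - S N α := fun N =>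
    intervalIntegral.integral_eq_sub_of_hasDerivAt (by rw [uIcc_of_le hαβ]; exact hSder N)
      (by apply ContinuousOn.intervalIntegrable; rw [uIcc_of_le hαβ]; exact hΦcont N)
  have hIoc : uIoc α β ⊆ Icc α β := by rw [uIoc_of_le hαβ]; exact Ioc_subset_Icc_self
  have hzero : Tendsto (fun N => ∫ t in α..β, Φ N t) atTop (𝓝 (∫ _ in α..β, (0 : ℝ))) := by
    refine intervalIntegral.tendsto_integral_filter_of_dominated_convergence
      (fun _ => 2 * D * √M) ?_ ?_ (by simp) ?_
    · exact .of_forall fun N =>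
        ((hΦcont N).mono hIoc).aestronglyMeasurable measurableSet_uIoc
    · refine .of_forall fun N => .of_forall fun t ht => (hΦle N t (hIoc ht)).trans ?_
      have := hterm t (hIoc ht) ((N : ℤ) + 1)
      gcongr
    · refine .of_forall fun t ht => ?_
      refine squeeze_zero_norm (hΦle · t (hIoc ht)) ?_
      have h1 := (hu t (hIoc ht)).2.tendsto_atTop_zero.sqrt
      simp only [← sq_rpow_eq (kk_pos hk0 hlam _).le, ← mul_pow] at h1
      simp only [Real.sqrt_sq (mul_nonneg (hkp _ _).le (norm_nonneg _)), Real.sqrt_zero] at h1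
      simpa using h1.const_mul (2 * D)
  have hlim : Tendsto (fun N => ∫ t in α..β, Φ N t) atTop
      (𝓝 ((∑' n : ℕ, kk k0 lam ((n : ℤ) + 1) ^ (2 * d) * ‖u β ((n : ℤ) + 1)‖ ^ 2) -
        ∑' n : ℕ, kk k0 lam ((n : ℤ) + 1) ^ (2 * d) * ‖u α ((n : ℤ) + 1)‖ ^ 2)) := by
    simp only [hint]
    exact (hu β ⟨hαβ, le_rfl⟩).2.hasSum.tendsto_sum_nat.sub
      (hu α ⟨le_rfl, hαβ⟩).2.hasSum.tendsto_sum_nat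
  have := tendsto_nhds_unique hlim hzero
  simp only [intervalIntegral.integral_zero] at this
  linarith

end Enstrophy

section PhaseSpace

open scoped ENNReal

variable {a b c k0 lam s : ℝ}

/-- The polarization of the sabra nonlinearity. -/
noncomputable def sabraBilin (a b c k0 lam : ℝ) (u w : ℤ → ℂ) (n : ℤ) : ℂ :=
  -Complex.I * ((a : ℂ) * (kk k0 lam (n + 1) : ℝ) * u (n + 2) * (starRingEnd ℂ) (w (n + 1))
    + (b : ℂ) * (kk k0 lam n : ℝ) * u (n + 1) * (starRingEnd ℂ) (w (n - 1))
    - (c : ℂ) * (kk k0 lam (n - 1) : ℝ) * w (n - 1) * u (n - 2))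

/-- The constant in the bilinear estimate `|B(u, w)|_s ≤ C (sup_n k_n |w_n|) |u|_s`. -/
noncomputable def bilinConst (a b c lam s : ℝ) : ℝ :=
  9 * ((a ^ 2 + b ^ 2 * lam ^ 2 + c ^ 2) * lam ^ (2 * (2 * s)))

lemma bilinConst_nonneg (hlam : 1 < lam) : 0 ≤ bilinConst a b c lam s := by
  have : 0 < lam ^ (2 * (2 * s)) := Real.rpow_pos_of_pos (by linarith) _
  unfold bilinConst
  positivity

lemma norm_sq_sabraBilin_le (hk0 : 0 < k0) (hlam : 1 < lam) (hs : 0 ≤ s) {M : ℝ}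
    (u : ℤ → ℂ) {w : ℤ → ℂ} (hw : ∀ m, kk k0 lam m * ‖w m‖ ≤ M) (n : ℤ) :
    kk k0 lam n ^ (2 * s) * ‖sabraBilin a b c k0 lam u w n‖ ^ 2 ≤
      3 * ((a ^ 2 + b ^ 2 * lam ^ 2 + c ^ 2) * lam ^ (2 * (2 * s))) * M ^ 2 *
        (kk k0 lam (n + 2) ^ (2 * s) * ‖u (n + 2)‖ ^ 2 +
          kk k0 lam (n + 1) ^ (2 * s) * ‖u (n + 1)‖ ^ 2 +
          kk k0 lam (n - 2) ^ (2 * s) * ‖u (n - 2)‖ ^ 2) := by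
  have hkp : ∀ m : ℤ, 0 < kk k0 lam m ^ (2 * s) := fun m =>
    Real.rpow_pos_of_pos (kk_pos hk0 hlam m) _
  have hk := fun m => kk_pos hk0 hlam m
  have hsq : ∀ m, (kk k0 lam m * ‖w m‖) ^ 2 ≤ M ^ 2 := fun m =>
    pow_le_pow_left₀ (mul_nonneg (hk m).le (norm_nonneg _)) (hw m) 2
  set L := lam ^ (2 * (2 * s)) with hL
  have hL1 : 1 ≤ L := Real.one_le_rpow hlam.le (by linarith)
  have hmono : ∀ m m' : ℤ, m ≤ m' → kk k0 lam m ^ (2 * s) ≤ kk k0 lam m' ^ (2 * s) :=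
    fun m m' h => Real.rpow_le_rpow (hk m).le (kk_mono hk0 hlam h) (by linarith)
  set x := |a| * kk k0 lam (n + 1) * ‖u (n + 2)‖ * ‖w (n + 1)‖ with hx
  set y := |b| * kk k0 lam n * ‖u (n + 1)‖ * ‖w (n - 1)‖ with hy
  set z := |c| * kk k0 lam (n - 1) * ‖w (n - 1)‖ * ‖u (n - 2)‖ with hz
  have hnorm : ‖sabraBilin a b c k0 lam u w n‖ ≤ x + y + z := by
    rw [sabraBilin, norm_mul, norm_neg, Complex.norm_I, one_mul]
    refine (norm_sub_le _ _).trans ((add_le_add_left (norm_add_le _ _) _).trans_eq ?_)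
    simp only [norm_mul, Complex.norm_real, Real.norm_eq_abs, RCLike.norm_conj,
      abs_of_pos (hk _), hx, hy, hz]
  have hnorm2 : ‖sabraBilin a b c k0 lam u w n‖ ^ 2 ≤ 3 * (x ^ 2 + y ^ 2 + z ^ 2) := by
    refine (pow_le_pow_left₀ (norm_nonneg _) hnorm 2).trans ?_
    nlinarith [sq_nonneg (x - y), sq_nonneg (y - z), sq_nonneg (x - z)]
  have hx2 : kk k0 lam n ^ (2 * s) * x ^ 2 ≤
      a ^ 2 * L * M ^ 2 * (kk k0 lam (n + 2) ^ (2 * s) * ‖u (n + 2)‖ ^ 2) := by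
    calc kk k0 lam n ^ (2 * s) * x ^ 2
        = a ^ 2 * 1 * (kk k0 lam (n + 1) * ‖w (n + 1)‖) ^ 2 *
          (kk k0 lam n ^ (2 * s) * ‖u (n + 2)‖ ^ 2) := by rw [hx, ← sq_abs a]; ring
      _ ≤ _ := by
        have := hsq (n + 1)
        have := hmono n (n + 2) (by omega)
        have := hkp n
        gcongr
  have hy2 : kk k0 lam n ^ (2 * s) * y ^ 2 ≤
      b ^ 2 * lam ^ 2 * L * M ^ 2 * (kk k0 lam (n + 1) ^ (2 * s) * ‖u (n + 1)‖ ^ 2) := by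
    have e : kk k0 lam n = lam * kk k0 lam (n - 1) := by
      rw [← kk_add_one hlam]; congr 1; ring
    calc kk k0 lam n ^ (2 * s) * y ^ 2
        = b ^ 2 * lam ^ 2 * 1 * (kk k0 lam (n - 1) * ‖w (n - 1)‖) ^ 2 *
          (kk k0 lam n ^ (2 * s) * ‖u (n + 1)‖ ^ 2) := by
          rw [hy, ← sq_abs b, e]; ring
      _ ≤ _ := by
        have := hsq (n - 1)
        have := hmono n (n + 1) (by omega)
        have := hkp n
        gcongr
  have hz2 : kk k0 lam n ^ (2 * s) * z ^ 2 ≤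
      c ^ 2 * L * M ^ 2 * (kk k0 lam (n - 2) ^ (2 * s) * ‖u (n - 2)‖ ^ 2) := by
    have e : kk k0 lam n ^ (2 * s) = L * kk k0 lam (n - 2) ^ (2 * s) := by
      have h1 : n = n - 2 + 1 + 1 := by ring
      conv_lhs => rw [h1]
      have h2 : L = lam ^ (2 * s) * lam ^ (2 * s) := by
        rw [hL, ← Real.rpow_add (by linarith)]; congr 1; ring
      rw [kk_rpow_add_one hk0 hlam, kk_rpow_add_one hk0 hlam, h2]
      ring
    calc kk k0 lam n ^ (2 * s) * z ^ 2
        = c ^ 2 * L * (kk k0 lam (n - 1) * ‖w (n - 1)‖) ^ 2 *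
          (kk k0 lam (n - 2) ^ (2 * s) * ‖u (n - 2)‖ ^ 2) := by
          rw [hz, ← sq_abs c, e]; ring
      _ ≤ _ := by
        have := hsq (n - 1)
        have := hkp (n - 2)
        gcongr
  have hp : ∀ m, 0 ≤ kk k0 lam m ^ (2 * s) * ‖u m‖ ^ 2 := fun m =>
    mul_nonneg (hkp m).le (sq_nonneg _)
  set X := kk k0 lam (n + 2) ^ (2 * s) * ‖u (n + 2)‖ ^ 2
  set Y := kk k0 lam (n + 1) ^ (2 * s) * ‖u (n + 1)‖ ^ 2
  set Z := kk k0 lam (n - 2) ^ (2 * s) * ‖u (n - 2)‖ ^ 2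
  have hX : 0 ≤ X := hp _
  have hY : 0 ≤ Y := hp _
  have hZ : 0 ≤ Z := hp _
  set A := a ^ 2 * L * M ^ 2 with hA
  set B := b ^ 2 * lam ^ 2 * L * M ^ 2 with hB
  set C := c ^ 2 * L * M ^ 2 with hC
  have hA0 : 0 ≤ A := by positivity
  have hB0 : 0 ≤ B := by positivity
  have hC0 : 0 ≤ C := by positivity
  calc kk k0 lam n ^ (2 * s) * ‖sabraBilin a b c k0 lam u w n‖ ^ 2
      ≤ kk k0 lam n ^ (2 * s) * (3 * (x ^ 2 + y ^ 2 + z ^ 2)) :=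
        mul_le_mul_of_nonneg_left hnorm2 (hkp n).le
    _ = 3 * (kk k0 lam n ^ (2 * s) * x ^ 2 + kk k0 lam n ^ (2 * s) * y ^ 2 +
        kk k0 lam n ^ (2 * s) * z ^ 2) := by ring
    _ ≤ 3 * (A * X + B * Y + C * Z) := by gcongr
    _ ≤ 3 * ((A + B + C) * (X + Y + Z)) := by
        have h1 : 0 ≤ A * (Y + Z) + B * (X + Z) + C * (X + Y) := by positivity
        nlinarith
    _ = _ := by rw [hA, hB, hC]; ring

lemma summable_sabraBilin (hk0 : 0 < k0) (hlam : 1 < lam) (hs : 0 ≤ s) {M : ℝ}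
    {u w : ℤ → ℂ} (hu : InV k0 lam s u) (hw : ∀ m, kk k0 lam m * ‖w m‖ ≤ M) :
    Summable (fun n : ℕ =>
      kk k0 lam ((n : ℤ) + 1) ^ (2 * s) * ‖sabraBilin a b c k0 lam u w ((n : ℤ) + 1)‖ ^ 2) ∧
    ∑' n : ℕ, kk k0 lam ((n : ℤ) + 1) ^ (2 * s) *
        ‖sabraBilin a b c k0 lam u w ((n : ℤ) + 1)‖ ^ 2 ≤
      bilinConst a b c lam s * M ^ 2 *
        ∑' n : ℕ, kk k0 lam ((n : ℤ) + 1) ^ (2 * s) * ‖u ((n : ℤ) + 1)‖ ^ 2 := by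
  set q : ℤ → ℝ := fun m => kk k0 lam m ^ (2 * s) * ‖u m‖ ^ 2 with hq
  have hq0 : ∀ m, 0 ≤ q m := fun m =>
    mul_nonneg (Real.rpow_nonneg (kk_pos hk0 hlam m).le _) (sq_nonneg _)
  have hqz : ∀ m ≤ 0, q m = 0 := fun m hm => by simp [hq, hu.1 m hm]
  set f : ℕ → ℝ := fun n => q ((n : ℤ) + 1) with hf
  have hfs : Summable f := hu.2
  have hshift : ∀ j : ℕ, Summable (fun n => f (n + j)) ∧ ∑' n, f (n + j) ≤ ∑' n, f n := by
    intro j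
    refine ⟨(summable_nat_add_iff j).2 hfs, ?_⟩
    rw [← hfs.sum_add_tsum_nat_add j]
    exact le_add_of_nonneg_left (Finset.sum_nonneg fun n _ => hq0 _)
  have hback : Summable (fun n : ℕ => q ((n : ℤ) - 1)) ∧
      ∑' n : ℕ, q ((n : ℤ) - 1) = ∑' n, f n := by
    have e : (fun n : ℕ => q (((n + 2 : ℕ) : ℤ) - 1)) = f := by
      funext n; simp only [hf]; congr 1; push_cast; ring
    have h1 : Summable (fun n : ℕ => q ((n : ℤ) - 1)) := by
      rw [← summable_nat_add_iff 2, e]; exact hfs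
    refine ⟨h1, ?_⟩
    rw [← h1.sum_add_tsum_nat_add 2, e]
    simp [Finset.sum_range_succ, hqz]
  set D := 3 * ((a ^ 2 + b ^ 2 * lam ^ 2 + c ^ 2) * lam ^ (2 * (2 * s))) * M ^ 2 with hD
  have hD0 : 0 ≤ D := by
    have : 0 < lam ^ (2 * (2 * s)) := Real.rpow_pos_of_pos (by linarith) _
    positivity
  have hle : ∀ n : ℕ, kk k0 lam ((n : ℤ) + 1) ^ (2 * s) *
      ‖sabraBilin a b c k0 lam u w ((n : ℤ) + 1)‖ ^ 2 ≤
      D * (f (n + 2) + f (n + 1) + q ((n : ℤ) - 1)) := by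
    intro n
    refine (norm_sq_sabraBilin_le hk0 hlam hs u hw _).trans_eq ?_
    have e1 : (n : ℤ) + 1 + 2 = ((n + 2 : ℕ) : ℤ) + 1 := by push_cast; ring
    have e2 : (n : ℤ) + 1 + 1 = ((n + 1 : ℕ) : ℤ) + 1 := by push_cast; ring
    have e3 : (n : ℤ) + 1 - 2 = n - 1 := by ring
    rw [e1, e2, e3]
  have hR := ((((hshift 2).1.add (hshift 1).1).add hback.1).mul_left D)
  have hsum := Summable.of_nonneg_of_le (fun n : ℕ => mul_nonneg
    (Real.rpow_nonneg (kk_pos hk0 hlam _).le _) (sq_nonneg _)) hle hR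
  refine ⟨hsum, (hsum.tsum_le_tsum hle hR).trans ?_⟩
  rw [tsum_mul_left, ((hshift 2).1.add (hshift 1).1).tsum_add hback.1,
    (hshift 2).1.tsum_add (hshift 1).1, hback.2]
  calc D * (∑' n, f (n + 2) + ∑' n, f (n + 1) + ∑' n, f n)
      ≤ D * (∑' n, f n + ∑' n, f n + ∑' n, f n) := by
        have := (hshift 2).2
        have := (hshift 1).2
        gcongr
    _ = _ := by rw [hD, bilinConst]; ring

lemma lp_two_hasSum (v : lp (fun _ : ℕ => ℂ) 2) :
    HasSum (fun n => ‖v n‖ ^ 2) (‖v‖ ^ 2) := by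
  simpa using lp.hasSum_norm (p := 2) (by simp) v

/-- The shell-model state whose rescaled amplitudes `k_n ^ s u_n` are the coordinates of `v`. -/
noncomputable def toSeq (k0 lam s : ℝ) (v : lp (fun _ : ℕ => ℂ) 2) (m : ℤ) : ℂ :=
  if 1 ≤ m then (((kk k0 lam m ^ s)⁻¹ : ℝ) : ℂ) * v (m - 1).toNat else 0

lemma toSeq_of_nonpos (v : lp (fun _ : ℕ => ℂ) 2) {m : ℤ} (hm : m ≤ 0) :
    toSeq k0 lam s v m = 0 := if_neg (by omega)

lemma toSeq_add_one (v : lp (fun _ : ℕ => ℂ) 2) (n : ℕ) :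
    toSeq k0 lam s v ((n : ℤ) + 1) =
      (((kk k0 lam ((n : ℤ) + 1) ^ s)⁻¹ : ℝ) : ℂ) * v n := by
  rw [toSeq, if_pos (by omega)]; simp

lemma toSeq_sub (v w : lp (fun _ : ℕ => ℂ) 2) :
    toSeq k0 lam s (v - w) = toSeq k0 lam s v - toSeq k0 lam s w := by
  funext m
  simp only [toSeq, Pi.sub_apply, lp.coeFn_sub]
  split_ifs <;> ring

lemma weight_mul_norm_sq_toSeq (hk0 : 0 < k0) (hlam : 1 < lam)
    (v : lp (fun _ : ℕ => ℂ) 2) (n : ℕ) :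
    kk k0 lam ((n : ℤ) + 1) ^ (2 * s) * ‖toSeq k0 lam s v ((n : ℤ) + 1)‖ ^ 2 = ‖v n‖ ^ 2 := by
  have h := Real.rpow_pos_of_pos (kk_pos hk0 hlam ((n : ℤ) + 1)) s
  rw [toSeq_add_one, norm_mul, Complex.norm_real, Real.norm_of_nonneg (inv_nonneg.2 h.le),
    ← sq_rpow_eq (kk_pos hk0 hlam _).le]
  field_simp

lemma toSeq_inV (hk0 : 0 < k0) (hlam : 1 < lam) (v : lp (fun _ : ℕ => ℂ) 2) :
    InV k0 lam s (toSeq k0 lam s v) :=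
  ⟨fun _ => toSeq_of_nonpos v, by
    simpa only [weight_mul_norm_sq_toSeq hk0 hlam] using (lp_two_hasSum v).summable⟩

lemma tsum_toSeq (hk0 : 0 < k0) (hlam : 1 < lam) (v : lp (fun _ : ℕ => ℂ) 2) :
    ∑' n : ℕ, kk k0 lam ((n : ℤ) + 1) ^ (2 * s) *
      ‖toSeq k0 lam s v ((n : ℤ) + 1)‖ ^ 2 = ‖v‖ ^ 2 := by
  simpa only [weight_mul_norm_sq_toSeq hk0 hlam] using (lp_two_hasSum v).tsum_eq

lemma kk_mul_norm_toSeq_le (hk0 : 0 < k0) (hlam : 1 < lam) (hs : 1 ≤ s)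
    (v : lp (fun _ : ℕ => ℂ) 2) (m : ℤ) :
    kk k0 lam m * ‖toSeq k0 lam s v m‖ ≤ kk k0 lam 1 ^ (1 - s) * ‖v‖ := by
  have h := (toSeq_inV (s := s) hk0 hlam v).kk_rpow_mul_norm_le_sqrt hk0 hlam
    (tsum_toSeq hk0 hlam v).le m
  rw [Real.sqrt_sq (norm_nonneg v)] at h
  simpa using kk_rpow_mul_norm_le hk0 hlam hs (fun _ => toSeq_of_nonpos v) h

lemma norm_sq_weight_mul (hk0 : 0 < k0) (hlam : 1 < lam) (z : ℂ) (n : ℤ) :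
    ‖((kk k0 lam n ^ s : ℝ) : ℂ) * z‖ ^ 2 = kk k0 lam n ^ (2 * s) * ‖z‖ ^ 2 := by
  rw [norm_mul, mul_pow, Complex.norm_real,
    Real.norm_of_nonneg (Real.rpow_nonneg (kk_pos hk0 hlam n).le s),
    sq_rpow_eq (kk_pos hk0 hlam _).le]

lemma memℓp_of_summable (hk0 : 0 < k0) (hlam : 1 < lam) {f : ℤ → ℂ}
    (hf : Summable fun n : ℕ => kk k0 lam ((n : ℤ) + 1) ^ (2 * s) * ‖f ((n : ℤ) + 1)‖ ^ 2) :
    Memℓp (fun n : ℕ => ((kk k0 lam ((n : ℤ) + 1) ^ s : ℝ) : ℂ) * f ((n : ℤ) + 1)) 2 := by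
  apply memℓp_gen
  have e : (2 : ℝ≥0∞).toReal = ((2 : ℕ) : ℝ) := by norm_num
  simp only [e, Real.rpow_natCast, norm_sq_weight_mul hk0 hlam]
  exact hf

/-- The sequence of rescaled amplitudes of an element of `V_s`. -/
noncomputable def ofSeq (hk0 : 0 < k0) (hlam : 1 < lam) (f : ℤ → ℂ)
    (hf : Summable fun n : ℕ => kk k0 lam ((n : ℤ) + 1) ^ (2 * s) * ‖f ((n : ℤ) + 1)‖ ^ 2) :
    lp (fun _ : ℕ => ℂ) 2 :=
  ⟨fun n : ℕ => ((kk k0 lam ((n : ℤ) + 1) ^ s : ℝ) : ℂ) * f ((n : ℤ) + 1),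
    memℓp_of_summable hk0 hlam hf⟩

lemma norm_sq_ofSeq (hk0 : 0 < k0) (hlam : 1 < lam) {f : ℤ → ℂ}
    (hf : Summable fun n : ℕ => kk k0 lam ((n : ℤ) + 1) ^ (2 * s) * ‖f ((n : ℤ) + 1)‖ ^ 2) :
    ‖ofSeq hk0 hlam f hf‖ ^ 2 =
      ∑' n : ℕ, kk k0 lam ((n : ℤ) + 1) ^ (2 * s) * ‖f ((n : ℤ) + 1)‖ ^ 2 := by
  rw [← (lp_two_hasSum _).tsum_eq]
  exact tsum_congr fun n => norm_sq_weight_mul hk0 hlam _ _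

lemma toSeq_ofSeq (hk0 : 0 < k0) (hlam : 1 < lam) {f : ℤ → ℂ} (hf : InV k0 lam s f) (m : ℤ) :
    toSeq k0 lam s (ofSeq hk0 hlam f hf.2) m = f m := by
  rcases le_or_gt m 0 with h | h
  · rw [toSeq_of_nonpos _ h, hf.1 m h]
  · obtain ⟨n, rfl⟩ : ∃ n : ℕ, m = (n : ℤ) + 1 := ⟨(m - 1).toNat, by omega⟩
    have h := (Real.rpow_pos_of_pos (kk_pos hk0 hlam ((n : ℤ) + 1)) s).ne'
    rw [toSeq_add_one, ofSeq, ← mul_assoc, ← Complex.ofReal_mul, inv_mul_cancel₀ h]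
    simp

/-- The sabra nonlinearity, polarized, as an operation on rescaled amplitudes. -/
noncomputable def lpBilin (a b c : ℝ) (hk0 : 0 < k0) (hlam : 1 < lam) (hs : 1 ≤ s)
    (v w : lp (fun _ : ℕ => ℂ) 2) : lp (fun _ : ℕ => ℂ) 2 :=
  ofSeq (s := s) hk0 hlam (sabraBilin a b c k0 lam (toSeq k0 lam s v) (toSeq k0 lam s w))
    (summable_sabraBilin hk0 hlam (by linarith) (toSeq_inV hk0 hlam v)
      (kk_mul_norm_toSeq_le hk0 hlam hs w)).1

lemma norm_lpBilin_le_of_le (hk0 : 0 < k0) (hlam : 1 < lam) (hs : 1 ≤ s)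
    (v : lp (fun _ : ℕ => ℂ) 2) {w : lp (fun _ : ℕ => ℂ) 2} {M : ℝ} (hM : 0 ≤ M)
    (hw : ∀ m, kk k0 lam m * ‖toSeq k0 lam s w m‖ ≤ M) :
    ‖lpBilin a b c hk0 hlam hs v w‖ ≤ √(bilinConst a b c lam s) * M * ‖v‖ := by
  have hC := bilinConst_nonneg (a := a) (b := b) (c := c) (s := s) hlam
  refine (sq_le_sq₀ (norm_nonneg _) (by positivity)).1 ?_
  rw [lpBilin, norm_sq_ofSeq, mul_pow, mul_pow, Real.sq_sqrt hC,
    ← tsum_toSeq (s := s) hk0 hlam v]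
  exact (summable_sabraBilin hk0 hlam (by linarith) (toSeq_inV hk0 hlam v) hw).2

lemma norm_lpBilin_le (hk0 : 0 < k0) (hlam : 1 < lam) (hs : 1 ≤ s)
    (v w : lp (fun _ : ℕ => ℂ) 2) :
    ‖lpBilin a b c hk0 hlam hs v w‖ ≤
      √(bilinConst a b c lam s) * (kk k0 lam 1 ^ (1 - s) * ‖w‖) * ‖v‖ :=
  norm_lpBilin_le_of_le hk0 hlam hs v
    (mul_nonneg (Real.rpow_nonneg (kk_pos hk0 hlam 1).le _) (norm_nonneg w))
    (kk_mul_norm_toSeq_le hk0 hlam hs w)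

lemma lpBilin_self_sub_self (hk0 : 0 < k0) (hlam : 1 < lam) (hs : 1 ≤ s)
    (v w : lp (fun _ : ℕ => ℂ) 2) :
    lpBilin a b c hk0 hlam hs v v - lpBilin a b c hk0 hlam hs w w =
      lpBilin a b c hk0 hlam hs (v - w) v + lpBilin a b c hk0 hlam hs w (v - w) := by
  ext n
  simp only [lp.coeFn_sub, lp.coeFn_add, Pi.sub_apply, Pi.add_apply, lpBilin, ofSeq, toSeq_sub,
    sabraBilin, map_sub]
  ring

lemma lpBilin_self_lipschitz (a b c : ℝ) (hk0 : 0 < k0) (hlam : 1 < lam) (hs : 1 ≤ s) (ρ : ℝ) :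
    ∃ K : ℝ, 0 ≤ K ∧ ∀ v w : lp (fun _ : ℕ => ℂ) 2, ‖v‖ ≤ ρ → ‖w‖ ≤ ρ →
      ‖lpBilin a b c hk0 hlam hs v v - lpBilin a b c hk0 hlam hs w w‖ ≤ K * ‖v - w‖ := by
  set C := √(bilinConst a b c lam s) * kk k0 lam 1 ^ (1 - s)
  have hC : 0 ≤ C := mul_nonneg (Real.sqrt_nonneg _)
    (Real.rpow_nonneg (kk_pos hk0 hlam 1).le _)
  refine ⟨2 * C * |ρ|, by positivity, fun v w hv hw => ?_⟩
  rw [lpBilin_self_sub_self]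
  have hv' := hv.trans (le_abs_self ρ)
  have hw' := hw.trans (le_abs_self ρ)
  calc _ ≤ C * ‖v‖ * ‖v - w‖ + C * ‖v - w‖ * ‖w‖ := by
        refine (norm_add_le _ _).trans (add_le_add ?_ ?_)
        · exact (norm_lpBilin_le hk0 hlam hs _ _).trans_eq (by ring)
        · exact (norm_lpBilin_le hk0 hlam hs _ _).trans_eq (by ring)
    _ ≤ C * |ρ| * ‖v - w‖ + C * ‖v - w‖ * |ρ| := by gcongr
    _ = _ := by ring

end PhaseSpace

section GlobalSolution

variable {a b c k0 lam s d : ℝ}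

lemma hasDerivAt_toSeq (hk0 : 0 < k0) (hlam : 1 < lam) (hs : 1 ≤ s) {g : ℝ}
    {v : ℝ → lp (fun _ : ℕ => ℂ) 2} {t : ℝ}
    (hv : HasDerivAt v (g • -lpBilin a b c hk0 hlam hs (v t) (v t)) t) {n : ℤ} (hn : 1 ≤ n) :
    HasDerivAt (fun τ => toSeq k0 lam s (v τ) n)
      (-((g : ℂ) * sB a b c k0 lam (toSeq k0 lam s (v t)) n)) t := by
  obtain ⟨m, rfl⟩ : ∃ m : ℕ, n = (m : ℤ) + 1 := ⟨(n - 1).toNat, by omega⟩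
  have h := (Real.rpow_pos_of_pos (kk_pos hk0 hlam ((m : ℤ) + 1)) s).ne'
  have hm := (lp.evalCLM ℝ (fun _ : ℕ => ℂ) 2 m).hasFDerivAt.comp_hasDerivAt t hv
  have hm' := hm.const_mul ((((kk k0 lam ((m : ℤ) + 1) ^ s)⁻¹ : ℝ) : ℂ))
  simp only [toSeq_add_one]
  refine hm'.congr_deriv ?_
  have e : lp.evalCLM ℝ (fun _ : ℕ => ℂ) 2 m (g • -lpBilin a b c hk0 hlam hs (v t) (v t)) =
      -((g : ℂ) * (((kk k0 lam ((m : ℤ) + 1) ^ s : ℝ) : ℂ) *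
        sB a b c k0 lam (toSeq k0 lam s (v t)) ((m : ℤ) + 1))) := by
    rw [map_smul, map_neg, smul_neg, Complex.real_smul]
    rfl
  have h' : ((kk k0 lam ((m : ℤ) + 1) ^ s : ℝ) : ℂ) ≠ 0 := Complex.ofReal_ne_zero.2 h
  rw [e, Complex.ofReal_inv]
  field_simp

lemma enstrophy_toSeq_eq (hk0 : 0 < k0) (hlam : 1 < lam) (hd : 1 ≤ d) (hs : 1 ≤ s) (hds : d ≤ s)
    (hroot : a + b * lam ^ (2 * d) + c * (lam ^ (2 * d)) ^ 2 = 0) {τ : ℝ} (hτ : 0 ≤ τ)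
    {g : ℝ → ℝ} {v : ℝ → lp (fun _ : ℕ => ℂ) 2} (hg : ContinuousOn g (Set.Icc 0 τ))
    (hg1 : ∀ t ∈ Set.Icc 0 τ, |g t| ≤ 1)
    (hv : ∀ t ∈ Set.Icc 0 τ,
      HasDerivAt v (g t • -lpBilin a b c hk0 hlam hs (v t) (v t)) t) :
    ∑' n : ℕ, kk k0 lam ((n : ℤ) + 1) ^ (2 * d) * ‖toSeq k0 lam s (v 0) ((n : ℤ) + 1)‖ ^ 2 =
      ∑' n : ℕ, kk k0 lam ((n : ℤ) + 1) ^ (2 * d) *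
        ‖toSeq k0 lam s (v τ) ((n : ℤ) + 1)‖ ^ 2 := by
  obtain ⟨R, hR⟩ := isCompact_Icc.exists_bound_of_continuousOn
    (fun t ht => (hv t ht).continuousAt.continuousWithinAt)
  have hle := fun t => (toSeq_inV (s := s) hk0 hlam (v t)).of_le hk0 hlam hds
  refine enstrophy_eq_of_trajectory (u := fun t => toSeq k0 lam s (v t)) hk0 hlam hd hroot
    (M := kk k0 lam 1 ^ (2 * d - 2 * s) * R ^ 2) hτ hg hg1
    (fun t _ => (hle t).1) (fun t ht => (hle t).2.trans ?_)
    (fun t ht n hn => hasDerivAt_toSeq hk0 hlam hs (hv t ht) hn)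
  rw [tsum_toSeq hk0 hlam]
  have := Real.rpow_nonneg (kk_pos hk0 hlam 1).le (2 * d - 2 * s)
  have := hR t ht
  gcongr

lemma norm_trajectory_le (hk0 : 0 < k0) (hlam : 1 < lam) (hd : 1 ≤ d) (hs : 1 ≤ s) (hds : d ≤ s)
    (hroot : a + b * lam ^ (2 * d) + c * (lam ^ (2 * d)) ^ 2 = 0)
    (x₀ : lp (fun _ : ℕ => ℂ) 2) (T : ℝ) :
    ∃ R : ℝ, ∀ τ ∈ Set.Icc 0 T, ∀ (g : ℝ → ℝ) (v : ℝ → lp (fun _ : ℕ => ℂ) 2),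
      ContinuousOn g (Set.Icc 0 τ) → (∀ t ∈ Set.Icc 0 τ, |g t| ≤ 1) → v 0 = x₀ →
      (∀ t ∈ Set.Icc 0 τ,
        HasDerivAt v (g t • -lpBilin a b c hk0 hlam hs (v t) (v t)) t) → ‖v τ‖ ≤ R := by
  set E₀ := ∑' n : ℕ, kk k0 lam ((n : ℤ) + 1) ^ (2 * d) *
    ‖toSeq k0 lam s x₀ ((n : ℤ) + 1)‖ ^ 2
  set M := kk k0 lam 1 ^ (1 - d) * √E₀
  have hM : 0 ≤ M := mul_nonneg (Real.rpow_nonneg (kk_pos hk0 hlam 1).le _) (Real.sqrt_nonneg _)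
  set Λ := √(bilinConst a b c lam s) * M
  have hΛ : 0 ≤ Λ := mul_nonneg (Real.sqrt_nonneg _) hM
  refine ⟨‖x₀‖ * Real.exp (Λ * T), fun τ hτ g v hg hg1 hv0 hv => ?_⟩
  have hbound : ∀ t ∈ Set.Icc 0 τ,
      ‖g t • -lpBilin a b c hk0 hlam hs (v t) (v t)‖ ≤ Λ * ‖v t‖ := by
    intro t ht
    have hsub : Set.Icc 0 t ⊆ Set.Icc 0 τ := Set.Icc_subset_Icc_right ht.2
    have hE := enstrophy_toSeq_eq hk0 hlam hd hs hds hroot ht.1 (hg.mono hsub)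
      (fun r hr => hg1 r (hsub hr)) (fun r hr => hv r (hsub hr))
    rw [hv0] at hE
    have hw : ∀ m, kk k0 lam m * ‖toSeq k0 lam s (v t) m‖ ≤ M := fun m => by
      have h := ((toSeq_inV (s := s) hk0 hlam (v t)).of_le hk0 hlam
        hds).1.kk_rpow_mul_norm_le_sqrt hk0 hlam hE.ge m
      simpa using kk_rpow_mul_norm_le hk0 hlam hd (fun _ => toSeq_of_nonpos (v t)) h
    rw [norm_smul, norm_neg, Real.norm_eq_abs]
    calc _ ≤ 1 * ‖lpBilin a b c hk0 hlam hs (v t) (v t)‖ := by gcongr; exact hg1 t ht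
      _ ≤ _ := by rw [one_mul]; exact norm_lpBilin_le_of_le hk0 hlam hs _ hM hw
  have hgr := norm_le_gronwallBound_of_norm_deriv_right_le (δ := ‖x₀‖) (K := Λ) (ε := 0)
    (fun t ht => (hv t ht).continuousAt.continuousWithinAt)
    (fun t ht => (hv t ⟨ht.1, ht.2.le⟩).hasDerivWithinAt) (by rw [hv0])
    (fun t ht => by simpa using hbound t ⟨ht.1, ht.2.le⟩) τ ⟨hτ.1, le_rfl⟩
  rw [gronwallBound_ε0, sub_zero] at hgr
  refine hgr.trans ?_
  have := hτ.2
  gcongr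

lemma continuous_lpBilin_self (hk0 : 0 < k0) (hlam : 1 < lam) (hs : 1 ≤ s) :
    Continuous fun v => lpBilin a b c hk0 hlam hs v v := by
  refine continuous_iff_continuousAt.2 fun v => ?_
  obtain ⟨K, hK, hlip⟩ := lpBilin_self_lipschitz a b c hk0 hlam hs (‖v‖ + 1)
  have h : LipschitzOnWith K.toNNReal (fun v => lpBilin a b c hk0 hlam hs v v)
      (Metric.ball 0 (‖v‖ + 1)) := LipschitzOnWith.of_dist_le_mul fun x hx y hy => by
    rw [dist_eq_norm, dist_eq_norm, Real.coe_toNNReal K hK]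
    exact hlip x y (mem_ball_zero_iff.1 hx).le (mem_ball_zero_iff.1 hy).le
  exact h.continuousOn.continuousAt (Metric.isOpen_ball.mem_nhds (by simp))

/-- If the enstrophy `|u|_d` with `d ≥ 1` is formally conserved, then the sabra model has global
solutions in `V_s` for `s ≥ d`. -/
lemma exists_isGlobalSolution (hk0 : 0 < k0) (hlam : 1 < lam) (hd : 1 ≤ d) (hds : d ≤ s)
    (hroot : a + b * lam ^ (2 * d) + c * (lam ^ (2 * d)) ^ 2 = 0) {uin : ℤ → ℂ}
    (huin : InV k0 lam s uin) :
    ∃ u : ℝ → ℤ → ℂ, IsGlobalSolution a b c k0 lam s uin u := by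
  have hs : 1 ≤ s := hd.trans hds
  obtain ⟨v, hv0, hv⟩ := exists_global_trajectory_of_apriori
    (F := fun v => -lpBilin a b c hk0 hlam hs v v) (x₀ := ofSeq hk0 hlam uin huin.2)
    (fun ρ => by
      obtain ⟨K, hK, h⟩ := lpBilin_self_lipschitz a b c hk0 hlam hs ρ
      refine ⟨K, hK, fun v w hv hw => ?_⟩
      rw [neg_sub_neg, norm_sub_rev]
      exact h v w hv hw)
    (norm_trajectory_le hk0 hlam hd hs hds hroot _)
  have hcont : Continuous v := continuous_iff_continuousAt.2 fun t => (hv t).continuousAt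
  refine ⟨fun t => toSeq k0 lam s (v t), fun n => ?_, fun t => toSeq_inV hk0 hlam (v t),
    fun t n hn => ?_, ?_, ?_⟩
  · simp only [hv0, toSeq_ofSeq hk0 hlam huin]
  · simpa using hasDerivAt_toSeq (g := 1) hk0 hlam hs (by simpa using hv t) hn
  · simp only [tsum_toSeq hk0 hlam]
    fun_prop
  · have h : ∀ t, ∑' n : ℕ, kk k0 lam ((n : ℤ) + 1) ^ (2 * s) *
        ‖sB a b c k0 lam (toSeq k0 lam s (v t)) ((n : ℤ) + 1)‖ ^ 2 =
        ‖lpBilin a b c hk0 hlam hs (v t) (v t)‖ ^ 2 := fun t =>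
      (norm_sq_ofSeq hk0 hlam _).symm
    simp only [h]
    exact (((continuous_lpBilin_self hk0 hlam hs).comp hcont).norm).pow 2

lemma IsGlobalSolution.enstrophy_eq (hk0 : 0 < k0) (hlam : 1 < lam) (hd : 1 ≤ d) (hds : d ≤ s)
    (hroot : a + b * lam ^ (2 * d) + c * (lam ^ (2 * d)) ^ 2 = 0) {uin : ℤ → ℂ}
    {u : ℝ → ℤ → ℂ} (hu : IsGlobalSolution a b c k0 lam s uin u) {t t' : ℝ} (htt : t ≤ t') :
    ∑' n : ℕ, kk k0 lam ((n : ℤ) + 1) ^ (2 * d) * ‖u t ((n : ℤ) + 1)‖ ^ 2 =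
      ∑' n : ℕ, kk k0 lam ((n : ℤ) + 1) ^ (2 * d) * ‖u t' ((n : ℤ) + 1)‖ ^ 2 := by
  obtain ⟨-, huV, hder, hcont, -⟩ := hu
  obtain ⟨R, hR⟩ := (isCompact_Icc (a := t) (b := t')).exists_bound_of_continuousOn
    hcont.continuousOn
  have hle := fun t => (huV t).of_le hk0 hlam hds
  refine enstrophy_eq_of_trajectory hk0 hlam hd hroot (M := kk k0 lam 1 ^ (2 * d - 2 * s) * R)
    (g := fun _ => 1) htt continuousOn_const (by simp) (fun t _ => (hle t).1)
    (fun t ht => (hle t).2.trans ?_) (fun t _ n hn => by simpa using hder t n hn)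
  have := Real.rpow_nonneg (kk_pos hk0 hlam 1).le (2 * d - 2 * s)
  have := (le_abs_self _).trans (hR t ht)
  gcongr

end GlobalSolution

/-- in the two-dimensional regime `0 < c/a ≤ λ^{-2}` (so
`d₀ = (1/2) log_λ (a/c) ≥ 1`), with `a + b + c = 0`:
(i) `E_{d₀} = a(λ^{2d₀} - λ^{-2d₀}) + b(λ^{2d₀} - 1) = 0`;
(ii) the enstrophy `|u|_{d₀}` is conserved along smooth (`V_s`, `s ≥ d₀`) solutions of
the unforced inviscid sabra shell model;
(iii) every initial datum `u^{in} ∈ V_s`, `s ≥ d₀`, gives rise to a global solution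
`u ∈ C¹((-∞,∞), V_s)`. -/
theorem sabra_2d_regime_global_regularity
    (a b c k0 lam : ℝ) (hk0 : 0 < k0) (hlam : 1 < lam) (habc : a + b + c = 0)
    (hca : 0 < c / a) (hca2 : c / a ≤ lam ^ (-2 : ℤ)) :
    (a * (lam ^ (2 * ((1 : ℝ) / 2 * Real.logb lam (a / c))) -
        lam ^ (-(2 * ((1 : ℝ) / 2 * Real.logb lam (a / c))))) +
      b * (lam ^ (2 * ((1 : ℝ) / 2 * Real.logb lam (a / c))) - 1) = 0) ∧
    (∀ s : ℝ, (1 : ℝ) / 2 * Real.logb lam (a / c) ≤ s →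
      ∀ uin : ℤ → ℂ, ∀ u : ℝ → ℤ → ℂ, IsGlobalSolution a b c k0 lam s uin u →
        ∀ t t' : ℝ,
          (∑' n : ℕ, (kk k0 lam ((n : ℤ) + 1)) ^ (2 * ((1 : ℝ) / 2 * Real.logb lam (a / c))) *
              ‖u t ((n : ℤ) + 1)‖ ^ 2) =
          (∑' n : ℕ, (kk k0 lam ((n : ℤ) + 1)) ^ (2 * ((1 : ℝ) / 2 * Real.logb lam (a / c))) *
              ‖u t' ((n : ℤ) + 1)‖ ^ 2)) ∧
    (∀ s : ℝ, (1 : ℝ) / 2 * Real.logb lam (a / c) ≤ s →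
      ∀ uin : ℤ → ℂ, InV k0 lam s uin →
        ∃ u : ℝ → ℤ → ℂ, IsGlobalSolution a b c k0 lam s uin u) := by
  have hlam0 : 0 < lam := by linarith
  have hc : c ≠ 0 := fun h => by simp [h] at hca
  have ha : a ≠ 0 := fun h => by simp [h] at hca
  have hac : 0 < a / c := by simpa using inv_pos.2 hca
  have hpow : lam ^ (2 * ((1 : ℝ) / 2 * Real.logb lam (a / c))) = a / c := by
    rw [← mul_assoc, mul_one_div_cancel two_ne_zero, one_mul,
      Real.rpow_logb hlam0 hlam.ne' hac]
  have hd : 1 ≤ (1 : ℝ) / 2 * Real.logb lam (a / c) := by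
    have h : 2 ≤ Real.logb lam (a / c) := by
      rw [Real.le_logb_iff_rpow_le hlam hac, ← inv_div, le_inv_comm₀ (by positivity) hca]
      refine hca2.trans_eq ?_
      rw [← Real.rpow_neg hlam0.le, ← Real.rpow_intCast]
      norm_num
    linarith
  have hroot : a + b * lam ^ (2 * ((1 : ℝ) / 2 * Real.logb lam (a / c))) +
      c * (lam ^ (2 * ((1 : ℝ) / 2 * Real.logb lam (a / c)))) ^ 2 = 0 := by
    rw [hpow]
    field_simp
    linear_combination a * habc
  refine ⟨?_, fun s hs uin u hu t t' => ?_,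
    fun s hs uin huin => exists_isGlobalSolution hk0 hlam hd hs hroot huin⟩
  · rw [Real.rpow_neg hlam0.le, hpow]
    field_simp
    linear_combination (a - c) * habc
  · rcases le_total t t' with h | h
    · exact hu.enstrophy_eq hk0 hlam hd hs hroot h
    · exact (hu.enstrophy_eq hk0 hlam hd hs hroot h).symm
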